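/- For any reflexive linear order ▷ on X, the plurality-with-tie-breaking SRS R^{P,▷} satisfies WIVIP, TO, IWS, and SI; moreover, if |X| ≥ 2, R^{P,▷} does not satisfy NT. -/

import Mathlib

/-!
Social ranking solutions (SRSs).  The set of individuals is a finite type `X`;
coalitions are elements of `Finset X` (so the domain of a power relation is the
whole power set `𝔛 = 2^X`).  A weak order `≿ ∈ ℛ(𝔛)` is encoded as a relation
`r : Finset X → Finset X → Prop` together with (when needed) its list of
equivalence classes `L = [Σ₁, …, Σ_l]` in strictly decreasing order
(`IsClassList r L`).
-/

namespace SocialRanking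

variable {X : Type*} [Fintype X] [DecidableEq X]

/-- A weak order: a reflexive, complete and transitive binary relation. -/
def IsWeakOrder {A : Type*} (r : A → A → Prop) : Prop :=
  Reflexive r ∧ (∀ a b, r a b ∨ r b a) ∧ Transitive r

/-- A social ranking solution maps every weak order on `2^X` to a weak order on `X`. -/
def IsSRS (R : (Finset X → Finset X → Prop) → X → X → Prop) : Prop :=
  ∀ r, IsWeakOrder r → IsWeakOrder (R r)

/-- `IsClassList r L` : `L = [Σ₁, …, Σ_l]` is the list of the equivalence classes of
the weak order `r` on `2^X`, in strictly decreasing order (`≿ : Σ₁ ≻ ⋯ ≻ Σ_l`):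
every class is nonempty, every coalition lies in exactly one class, and
`S ≿ T ↔ i ≤ j` whenever `S ∈ Σᵢ` and `T ∈ Σⱼ` (0-based indices). -/
def IsClassList (r : Finset X → Finset X → Prop) (L : List (Finset (Finset X))) : Prop :=
  (∀ C ∈ L, C.Nonempty) ∧
  (∀ S : Finset X, ∃! i : ℕ, i < L.length ∧ S ∈ L.getD i ∅) ∧
  (∀ i j : ℕ, i < L.length → j < L.length →
    ∀ S ∈ L.getD i ∅, ∀ T ∈ L.getD j ∅, (r S T ↔ i ≤ j))

/-- The asymmetric (strict) part `P` of a relation. -/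
def StrictPart {A : Type*} (p : A → A → Prop) (a b : A) : Prop := p a b ∧ ¬ p b a

/-- The symmetric part `I` (indifference) of a relation. -/
def IndiffPart {A : Type*} (p : A → A → Prop) (a b : A) : Prop := p a b ∧ p b a

/-- The restrictions of `p` and `q` to `{x, y}` coincide. -/
def AgreeOn (p q : X → X → Prop) (x y : X) : Prop :=
  ∀ a ∈ ({x, y} : Set X), ∀ b ∈ ({x, y} : Set X), (p a b ↔ q a b)

/-- `|Δ[x]|` : the number of coalitions in `Δ` containing `x`. -/
def count (Δ : Finset (Finset X)) (x : X) : ℕ := (Δ.filter (fun S => x ∈ S)).card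

/-! ### Independence axioms and further axioms -/

/-- WIVIP: for a dichotomous `≿ : Σ₁ ≻ Σ₂`, any `x ∈ ⋂Σ₁` is socially strictly above
any `y ∉ ⋂Σ₁`. -/
def WIVIP (R : (Finset X → Finset X → Prop) → X → X → Prop) : Prop :=
  ∀ (r : Finset X → Finset X → Prop) (C₁ C₂ : Finset (Finset X)),
    IsClassList r [C₁, C₂] →
    ∀ x y : X, (∀ S ∈ C₁, x ∈ S) → (∃ S ∈ C₁, y ∉ S) →
    StrictPart (R r) x y

/-- IWS (independence from the worst set): if `≿ : Σ₁ ≻ ⋯ ≻ Σ_{l-1} ≻ Σ_l` (`l ≥ 2`)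
and `≿'` is obtained from `≿` by partitioning the worst class `Σ_l` into ordered
classes `Γ₁ ≻' ⋯ ≻' Γ_{l'}`, then `x P_≿ y` implies `x P_≿' y`. -/
def IWS (R : (Finset X → Finset X → Prop) → X → X → Prop) : Prop :=
  ∀ (r r' : Finset X → Finset X → Prop) (L Γ : List (Finset (Finset X)))
    (W : Finset (Finset X)),
    L ≠ [] → IsClassList r (L ++ [W]) → IsClassList r' (L ++ Γ) →
    ∀ x y : X, StrictPart (R r) x y → StrictPart (R r') x y

/-- IBS (independence from the best set): if `≿ : Σ₁ ≻ Σ₂ ≻ ⋯ ≻ Σ_l` (`l ≥ 2`)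
and `≿'` is obtained from `≿` by partitioning the best class `Σ₁` into ordered
classes `Γ₁ ≻' ⋯ ≻' Γ_{l'}`, then `x P_≿ y` implies `x P_≿' y`. -/
def IBS (R : (Finset X → Finset X → Prop) → X → X → Prop) : Prop :=
  ∀ (r r' : Finset X → Finset X → Prop) (B : Finset (Finset X))
    (L Γ : List (Finset (Finset X))),
    L ≠ [] → IsClassList r (B :: L) → IsClassList r' (Γ ++ L) →
    ∀ x y : X, StrictPart (R r) x y → StrictPart (R r') x y

/-- TO (tops-only): two weak orders with the same best equivalence class get the
same social ranking. -/
def TO (R : (Finset X → Finset X → Prop) → X → X → Prop) : Prop :=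
  ∀ (r r' : Finset X → Finset X → Prop) (B : Finset (Finset X))
    (L L' : List (Finset (Finset X))),
    IsClassList r (B :: L) → IsClassList r' (B :: L') → R r = R r'

/-- The class list obtained from `L` by sliding `Δ` out of class `k₁` into class `k₂`
(`Σ_{k₁}` is replaced by `Σ_{k₁} \ Δ` and `Σ_{k₂}` by `Σ_{k₂} ∪ Δ`; if `Δ = Σ_{k₁}`
the emptied class disappears). -/
def slide (L : List (Finset (Finset X))) (k₁ k₂ : ℕ) (Δ : Finset (Finset X)) :
    List (Finset (Finset X)) :=
  ((L.set k₁ ((L.getD k₁ ∅) \ Δ)).set k₂ ((L.getD k₂ ∅) ∪ Δ)).filter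
    (fun C => decide (C ≠ ∅))

/-- SI (slide independence): sliding a proper subfamily `Δ ⊊ Σ_{k₁}` with
`|Δ[x]| = |Δ[y]|` into another class does not change the social ranking on `{x, y}`. -/
def SI (R : (Finset X → Finset X → Prop) → X → X → Prop) : Prop :=
  ∀ (r r' : Finset X → Finset X → Prop) (L : List (Finset (Finset X)))
    (k₁ k₂ : ℕ) (x y : X) (Δ : Finset (Finset X)),
    IsClassList r L → k₁ < L.length → k₂ < L.length →
    Δ ⊂ L.getD k₁ ∅ → count Δ x = count Δ y →
    IsClassList r' (slide L k₁ k₂ Δ) →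
    AgreeOn (R r) (R r') x y

/-- SSI (strong slide independence): as SI, but `Δ ⊆ Σ_{k₁}` may be the whole class
(in which case the class disappears). -/
def SSI (R : (Finset X → Finset X → Prop) → X → X → Prop) : Prop :=
  ∀ (r r' : Finset X → Finset X → Prop) (L : List (Finset (Finset X)))
    (k₁ k₂ : ℕ) (x y : X) (Δ : Finset (Finset X)),
    IsClassList r L → k₁ < L.length → k₂ < L.length →
    Δ ⊆ L.getD k₁ ∅ → count Δ x = count Δ y →
    IsClassList r' (slide L k₁ k₂ Δ) →
    AgreeOn (R r) (R r') x y

/-- Top-SI: the condition of SI restricted to slides out of the best class (`k₁ = 1`,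
i.e. index `0`). -/
def TopSI (R : (Finset X → Finset X → Prop) → X → X → Prop) : Prop :=
  ∀ (r r' : Finset X → Finset X → Prop) (L : List (Finset (Finset X)))
    (k₂ : ℕ) (x y : X) (Δ : Finset (Finset X)),
    IsClassList r L → 0 < L.length → k₂ < L.length →
    Δ ⊂ L.getD 0 ∅ → count Δ x = count Δ y →
    IsClassList r' (slide L 0 k₂ Δ) →
    AgreeOn (R r) (R r') x y

/-- The class list of `≿' : Σ₁ ≻' ⋯ ≻' Σ_{k-1} ≻' Δ ≻' Σ_k \ Δ ≻' ⋯ ≻' Σ_l`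
(empty classes disappear). -/
def inuiList (L : List (Finset (Finset X))) (k : ℕ) (Δ : Finset (Finset X)) :
    List (Finset (Finset X)) :=
  (L.take k ++ [Δ, (L.getD k ∅) \ Δ] ++ L.drop (k + 1)).filter
    (fun C => decide (C ≠ ∅))

/-- INUI (independence of non-unanimous improvements). -/
def INUI (R : (Finset X → Finset X → Prop) → X → X → Prop) : Prop :=
  ∀ (r r' : Finset X → Finset X → Prop) (L : List (Finset (Finset X)))
    (k : ℕ) (Δ : Finset (Finset X)) (x y : X),
    IsClassList r L → k < L.length → Δ ⊆ L.getD k ∅ →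
    (∃ S ∈ Δ, x ∉ S) → (∃ S ∈ Δ, y ∉ S) →
    IsClassList r' (inuiList L k Δ) →
    AgreeOn (R r) (R r') x y

/-- The weak order `≿_π := {(π(S), π(T)) : S ≿ T}` induced by a permutation `π` of `X`. -/
def permRel (π : Equiv.Perm X) (r : Finset X → Finset X → Prop) :
    Finset X → Finset X → Prop :=
  fun A B => r (A.image π.symm) (B.image π.symm)

/-- NT (neutrality). -/
def NT (R : (Finset X → Finset X → Prop) → X → X → Prop) : Prop :=
  ∀ (π : Equiv.Perm X) (r : Finset X → Finset X → Prop), IsWeakOrder r →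
    ∀ x y : X, (R (permRel π r) (π x) (π y) ↔ R r x y)

/-- IIC (independence of irrelevant coalitions). -/
def IIC (R : (Finset X → Finset X → Prop) → X → X → Prop) : Prop :=
  ∀ (r r' : Finset X → Finset X → Prop), IsWeakOrder r → IsWeakOrder r' →
    ∀ x y : X,
      (∀ S : Finset X, x ∉ S → y ∉ S →
        (r (insert x S) (insert y S) ↔ r' (insert x S) (insert y S))) →
      (R r x y ↔ R r' x y)

/-! ### The social ranking solutions -/

/-- `θ_≿(x) = (|Σ₁[x]|, …, |Σ_l[x]|)`. -/
def theta (L : List (Finset (Finset X))) (x : X) : List ℕ := L.map (fun C => count C x)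

/-- The lexicographic order `a ≥^L b` on vectors of naturals. -/
def GeLex (a b : List ℕ) : Prop :=
  a = b ∨ ∃ k < a.length, (∀ j < k, a.getD j 0 = b.getD j 0) ∧ b.getD k 0 < a.getD k 0

/-- The dual lexicographic order `a ≥^DL b` (read from the last coordinate;
fewer appearances in worse classes is better). -/
def GeDualLex (a b : List ℕ) : Prop :=
  a = b ∨ ∃ k < a.length, (∀ j, k < j → a.getD j 0 = b.getD j 0) ∧ a.getD k 0 < b.getD k 0

/-- The lexicographic excellence solution `R^L` : `x R^L_≿ y ↔ θ_≿(x) ≥^L θ_≿(y)`. -/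
def RL (r : Finset X → Finset X → Prop) (x y : X) : Prop :=
  ∀ L, IsClassList r L → GeLex (theta L x) (theta L y)

/-- The dual lexicographic excellence solution `R^DL`. -/
def RDL (r : Finset X → Finset X → Prop) (x y : X) : Prop :=
  ∀ L, IsClassList r L → GeDualLex (theta L x) (theta L y)

/-- Plurality `R^P` : `x R^P_≿ y ↔ |Σ₁[x]| ≥ |Σ₁[y]|`. -/
def RP (r : Finset X → Finset X → Prop) (x y : X) : Prop :=
  ∀ L, IsClassList r L → count (L.getD 0 ∅) y ≤ count (L.getD 0 ∅) x

/-- `e_≿(x)` : the largest `k` such that `x` belongs to every coalition of each of the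
first `k` equivalence classes (`0` if `x ∉ T₁`). -/
def eIIS (L : List (Finset (Finset X))) (x : X) : ℕ :=
  (L.takeWhile (fun C => decide (∀ S ∈ C, x ∈ S))).length

/-- The intersection initial segment rule `R^IIS` : `x R^IIS_≿ y ↔ e_≿(x) ≥ e_≿(y)`. -/
def RIIS (r : Finset X → Finset X → Prop) (x y : X) : Prop :=
  ∀ L, IsClassList r L → eIIS L y ≤ eIIS L x

/-- The constant-`X` rule: everybody is ranked indifferent. -/
def RconstX : (Finset X → Finset X → Prop) → X → X → Prop := fun _ _ _ => True

/-- The split-plurality score `s^split_≿(z) = ∑_{S ∈ Σ₁ : z ∈ S} 1/|S|`. -/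
def splitScore (C : Finset (Finset X)) (z : X) : ℚ :=
  ∑ S ∈ C.filter (fun S => z ∈ S), (1 : ℚ) / (S.card : ℚ)

/-- Split-plurality `R^splitP`. -/
def RsplitP (r : Finset X → Finset X → Prop) (x y : X) : Prop :=
  ∀ L, IsClassList r L → splitScore (L.getD 0 ∅) y ≤ splitScore (L.getD 0 ∅) x

/-- Plurality with tie-breaking by a linear order `t = ▷` :
`x R^{P,▷}_≿ y ↔ (x P^P_≿ y ∨ (x I^P_≿ y ∧ x ▷ y))`. -/
def RPtie (t : X → X → Prop) (r : Finset X → Finset X → Prop) (x y : X) : Prop :=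
  ∀ L, IsClassList r L →
    (count (L.getD 0 ∅) y < count (L.getD 0 ∅) x ∨
      (count (L.getD 0 ∅) x = count (L.getD 0 ∅) y ∧ t x y))


/-!
The ranking depends only on the scores `|Σ₁[x]|` in the best class. Sliding `Δ` into or out of
`Σ₁` shifts the scores of `x` and `y` by the common amount `|Δ[x]| = |Δ[y]|`, which leaves their
comparison unchanged. When all coalitions are equally good, everybody has the same score and the
ranking is `▷` itself, whereas neutrality would make it symmetric.
-/

section BestClass

variable {α : Type*} {r : Finset α → Finset α → Prop} {L : List (Finset (Finset α))}

theorem IsClassList.length_pos (h : IsClassList r L) : 0 < L.length := by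
  obtain ⟨i, ⟨hi, -⟩, -⟩ := h.2.1 ∅
  exact i.zero_le.trans_lt hi

theorem IsClassList.nonempty_getD {i : ℕ} (h : IsClassList r L) (hi : i < L.length) :
    (L.getD i ∅).Nonempty := by
  rw [List.getD_eq_getElem _ _ hi]
  exact h.1 _ (List.getElem_mem hi)

theorem IsClassList.disjoint_getD {i j : ℕ} (h : IsClassList r L) (hij : i ≠ j) :
    Disjoint (L.getD i ∅) (L.getD j ∅) := by
  have lt_length {k : ℕ} {S : Finset α} (hS : S ∈ L.getD k ∅) : k < L.length := by
    by_contra! hk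
    rw [List.getD_eq_default _ _ hk] at hS
    exact Finset.notMem_empty S hS
  refine Finset.disjoint_left.2 fun S hi hj => hij ?_
  exact (h.2.1 S).unique ⟨lt_length hi, hi⟩ ⟨lt_length hj, hj⟩

theorem IsClassList.mem_getD_zero_iff (h : IsClassList r L) {S : Finset α} :
    S ∈ L.getD 0 ∅ ↔ ∀ T, r S T := by
  constructor
  · intro hS T
    obtain ⟨j, ⟨hj, hT⟩, -⟩ := h.2.1 T
    exact (h.2.2 0 j h.length_pos hj S hS T hT).2 j.zero_le
  · intro hS
    obtain ⟨i, ⟨hi, hSi⟩, -⟩ := h.2.1 S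
    obtain ⟨T, hT⟩ := h.nonempty_getD h.length_pos
    obtain rfl : i = 0 := Nat.le_zero.1 ((h.2.2 i 0 hi h.length_pos S hSi T hT).1 (hS T))
    exact hSi

theorem IsClassList.getD_zero_eq {L' : List (Finset (Finset α))} (h : IsClassList r L)
    (h' : IsClassList r L') : L.getD 0 ∅ = L'.getD 0 ∅ := by
  ext S
  rw [h.mem_getD_zero_iff, h'.mem_getD_zero_iff]

theorem isClassList_singleton_univ [Fintype α] :
    IsClassList (fun _ _ : Finset α => True) [Finset.univ] := by
  refine ⟨by simp, fun S => ⟨0, by simp, by simp +contextual⟩, ?_⟩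
  intro i j hi hj
  simp_all

end BestClass

section Count

variable {α : Type*} [DecidableEq α]

theorem count_union_of_disjoint {B Δ : Finset (Finset α)} (h : Disjoint B Δ) (x : α) :
    count (B ∪ Δ) x = count B x + count Δ x := by
  rw [count, Finset.filter_union,
    Finset.card_union_of_disjoint (Finset.disjoint_filter_filter h), count, count]

theorem count_sdiff_add_count {B Δ : Finset (Finset α)} (h : Δ ⊆ B) (x : α) :
    count (B \ Δ) x + count Δ x = count B x := by
  rw [← count_union_of_disjoint Finset.sdiff_disjoint, Finset.sdiff_union_of_subset h]

theorem count_lt_count_of_forall_mem {B : Finset (Finset α)} {x y : α} (hx : ∀ S ∈ B, x ∈ S)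
    (hy : ∃ S ∈ B, y ∉ S) : count B y < count B x := by
  rw [count, count, Finset.filter_true_of_mem hx]
  exact Finset.card_lt_card (Finset.filter_ssubset.2 hy)

theorem count_univ_eq [Fintype α] (x y : α) :
    count (Finset.univ : Finset (Finset α)) x = count Finset.univ y :=
  Finset.card_equiv (Equiv.swap x y).finsetCongr (by simp [Finset.mem_map_equiv])

end Count

section Slide

variable {α : Type*} [DecidableEq α] {B Δ : Finset (Finset α)} {L : List (Finset (Finset α))}

theorem getD_zero_slide_zero (hB : B.Nonempty) (k₁ : ℕ) :
    (slide (B :: L) k₁ 0 Δ).getD 0 ∅ = B ∪ Δ := by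
  have hne : B ∪ Δ ≠ ∅ := hB.inl.ne_empty
  cases k₁ <;> simp [slide, hne]

theorem getD_zero_slide_zero_succ (hΔ : ¬ B ⊆ Δ) (k₂ : ℕ) :
    (slide (B :: L) 0 (k₂ + 1) Δ).getD 0 ∅ = B \ Δ := by
  simp [slide, Finset.sdiff_eq_empty_iff_subset, hΔ]

theorem getD_zero_slide_succ_succ (hB : B.Nonempty) (k₁ k₂ : ℕ) :
    (slide (B :: L) (k₁ + 1) (k₂ + 1) Δ).getD 0 ∅ = B := by
  simp [slide, hB.ne_empty]

/-- The difference between the scores of `x` and `y` is preserved; both sides are moved so that no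
truncated subtraction occurs. -/
theorem IsClassList.count_getD_zero_slide_add {r : Finset α → Finset α → Prop} {k₁ : ℕ} {x y : α}
    (h : IsClassList r L) (hΔ : Δ ⊂ L.getD k₁ ∅) (hxy : count Δ x = count Δ y) (k₂ : ℕ) :
    count (L.getD 0 ∅) x + count ((slide L k₁ k₂ Δ).getD 0 ∅) y =
      count ((slide L k₁ k₂ Δ).getD 0 ∅) x + count (L.getD 0 ∅) y := by
  obtain _ | ⟨B, L⟩ := L
  · simp at hΔ
  have hB : B.Nonempty := h.1 B List.mem_cons_self
  rw [List.getD_cons_zero]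
  rcases k₁ with _ | k₁ <;> rcases k₂ with _ | k₂
  · rw [List.getD_cons_zero] at hΔ
    rw [getD_zero_slide_zero hB, Finset.union_eq_left.2 hΔ.subset]
  · rw [List.getD_cons_zero] at hΔ
    rw [getD_zero_slide_zero_succ hΔ.not_subset]
    have hx := count_sdiff_add_count hΔ.subset x
    have hy := count_sdiff_add_count hΔ.subset y
    omega
  · have hdisj : Disjoint B Δ :=
      (h.disjoint_getD k₁.succ_ne_zero.symm).mono_right hΔ.subset
    rw [getD_zero_slide_zero hB, count_union_of_disjoint hdisj, count_union_of_disjoint hdisj]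
    omega
  · rw [getD_zero_slide_succ_succ hB]

end Slide

section TieBreak

variable {α : Type*} {t : α → α → Prop} {s : α → ℕ} {x y : α}

/-- The ranking by decreasing score `s` with ties broken by `t`. Plurality with tie-breaking is
the case where `s` counts memberships in the best class. -/
def TieBreak (t : α → α → Prop) (s : α → ℕ) (x y : α) : Prop :=
  s y < s x ∨ s x = s y ∧ t x y

theorem strictPart_tieBreak_of_lt (h : s y < s x) : StrictPart (TieBreak t s) x y := by
  unfold StrictPart TieBreak
  omega

theorem tieBreak_iff_of_add_eq_add {s' : α → ℕ} (h : s x + s' y = s' x + s y) :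
    TieBreak t s x y ↔ TieBreak t s' x y := by
  refine or_congr ?_ (and_congr_left' ?_) <;> omega

theorem agreeOn_tieBreak_of_add_eq_add {s' : α → ℕ} (h : s x + s' y = s' x + s y) :
    AgreeOn (TieBreak t s) (TieBreak t s') x y := by
  rintro a (rfl | rfl) b (rfl | rfl) <;> apply tieBreak_iff_of_add_eq_add <;> omega

theorem tieBreak_eq_of_forall_eq (h : ∀ x y, s x = s y) : TieBreak t s = t := by
  ext x y
  simp [TieBreak, h x y]

theorem IsClassList.rPtie_eq_tieBreak [DecidableEq α] {r : Finset α → Finset α → Prop}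
    {L : List (Finset (Finset α))} (h : IsClassList r L) (t : α → α → Prop) :
    RPtie t r = TieBreak t (count (L.getD 0 ∅)) := by
  ext x y
  refine ⟨fun hxy => hxy L h, fun hxy L' h' => ?_⟩
  rwa [h'.getD_zero_eq h]

end TieBreak

section Axioms

variable {α : Type*} {R : (Finset α → Finset α → Prop) → α → α → Prop}

theorem TO.iws (hR : TO R) : IWS R := by
  intro r r' L Γ W hL h h' x y hxy
  obtain ⟨B, L, rfl⟩ := List.exists_cons_of_ne_nil hL
  rwa [← hR r r' B (L ++ [W]) (L ++ Γ) h h']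

theorem NT.symm_of_indifferent [DecidableEq α] (hR : NT R) {x y : α}
    (hxy : R (fun _ _ => True) x y) : R (fun _ _ => True) y x := by
  have hweak : IsWeakOrder fun _ _ : Finset α => True :=
    ⟨fun _ => trivial, fun _ _ => .inl trivial, fun _ _ _ _ _ => trivial⟩
  have hperm : permRel (Equiv.swap x y) (fun _ _ => True) = fun _ _ => True := rfl
  simpa [hperm] using (hR (Equiv.swap x y) _ hweak x y).2 hxy

end Axioms

section PluralityTie

variable {α : Type*} [DecidableEq α] (t : α → α → Prop)

theorem wivip_rPtie : WIVIP (RPtie t) := by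
  intro r C₁ C₂ h x y hx hy
  rw [h.rPtie_eq_tieBreak]
  exact strictPart_tieBreak_of_lt (count_lt_count_of_forall_mem hx hy)

theorem to_rPtie : TO (RPtie t) := by
  intro r r' B L L' h h'
  rw [h.rPtie_eq_tieBreak, h'.rPtie_eq_tieBreak, List.getD_cons_zero, List.getD_cons_zero]

theorem si_rPtie : SI (RPtie t) := by
  intro r r' L k₁ k₂ x y Δ h _ _ hΔ hxy h'
  rw [h.rPtie_eq_tieBreak, h'.rPtie_eq_tieBreak]
  exact agreeOn_tieBreak_of_add_eq_add (h.count_getD_zero_slide_add hΔ hxy k₂)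

theorem rPtie_indifferent [Finite α] : RPtie t (fun _ _ => True) = t := by
  cases nonempty_fintype α
  rw [isClassList_singleton_univ.rPtie_eq_tieBreak]
  exact tieBreak_eq_of_forall_eq count_univ_eq

theorem not_nt_rPtie_of_strictPart [Finite α] {t : α → α → Prop} {x y : α}
    (hxy : StrictPart t x y) : ¬ NT (RPtie t) := by
  intro hNT
  have hsymm := hNT.symm_of_indifferent (x := x) (y := y)
  rw [rPtie_indifferent] at hsymm
  exact hxy.2 (hsymm hxy.1)

end PluralityTie

theorem exists_strictPart_of_total_of_antisymm {α : Type*} [Nontrivial α] {t : α → α → Prop}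
    (htotal : ∀ a b, t a b ∨ t b a) (hanti : ∀ a b, t a b → t b a → a = b) :
    ∃ x y, StrictPart t x y := by
  obtain ⟨x, y, hne⟩ := exists_pair_ne α
  rcases htotal x y with hxy | hyx
  · exact ⟨x, y, hxy, fun hyx => hne (hanti x y hxy hyx)⟩
  · exact ⟨y, x, hyx, fun hxy => hne (hanti x y hxy hyx)⟩

theorem pluralityTie_props_general {α : Type*} [Finite α] [DecidableEq α] (t : α → α → Prop) :
    (WIVIP (RPtie t) ∧ TO (RPtie t) ∧ IWS (RPtie t) ∧ SI (RPtie t)) ∧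
      ((∃ x y, StrictPart t x y) → ¬ NT (RPtie t)) :=
  ⟨⟨wivip_rPtie t, to_rPtie t, (to_rPtie t).iws, si_rPtie t⟩,
    fun ⟨_, _, hxy⟩ => not_nt_rPtie_of_strictPart hxy⟩

/-- For any reflexive linear order `▷` on `X`, plurality with tie-breaking by `▷`
satisfies WIVIP, TO, IWS and SI; moreover if `|X| ≥ 2` it does not satisfy NT. -/
theorem pluralityTie_props [Nonempty X] (t : X → X → Prop)
    (hrefl : Reflexive t) (htotal : ∀ a b : X, t a b ∨ t b a)
    (htrans : Transitive t) (hanti : ∀ a b : X, t a b → t b a → a = b) :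
    (WIVIP (RPtie t) ∧ TO (RPtie t) ∧ IWS (RPtie t) ∧ SI (RPtie t)) ∧
      (2 ≤ Fintype.card X → ¬ NT (RPtie t)) := by
  refine (pluralityTie_props_general t).imp_right fun not_nt hcard => not_nt ?_
  have : Nontrivial X := Fintype.one_lt_card_iff_nontrivial.1 hcard
  exact exists_strictPart_of_total_of_antisymm htotal hanti

end SocialRanking
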